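/- Fix 2 ≤ k ≤ n. For every μ ∈ ℝⁿ: the infimum over γ ∈ Γ_k with σ_k(γ) = 1 of Σᵢ μᵢ·σ_{k−1,i}(γ) equals k·σ_k(μ)^{1/k} if μ ∈ closure(Γ_k), and equals −∞ otherwise. -/

import Mathlib

/-- The `j`-th elementary symmetric polynomial of `x : Fin n → ℝ`. -/
def esymm (n j : ℕ) (x : Fin n → ℝ) : ℝ :=
  ∑ s ∈ Finset.powersetCard j (Finset.univ : Finset (Fin n)), ∏ i ∈ s, x i

/-!
Write `q_j = σ_{j+1} / σ_j`. Newton's inequalities and Euler's identity give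
`(j+2) q_{j+1}(x) = ∑ i, (x i - (x i)² / (x i + q_j(x|i)))`, where `x|i` is `x` with its `i`-th
entry set to `0`; by induction `Γ_k` is a convex cone on which every `q_j`, `j ≤ k`, is
superadditive. Since `σ_k = q_0 ⋯ q_{k-1}`, expanding `σ_k(γ + s μ)` to first order in `s` and
applying AM-GM yields Gårding's inequality, which is an equality at the multiple `γ` of `μ`
normalized to `σ_k(γ) = 1`; points of `closure(Γ_k)` are reached along `μ + ε 1`, `ε → 0⁺`.

For `μ` outside the closed cone, the ray `μ + t 1` meets the boundary, where `σ_k = 0`, at some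
`ν = μ + t 1` with `t > 0`. Along the normalizations `γ` of `ν + ε 1`, `∑ i, ν i σ_{k-1,i}(γ)`
stays bounded above, while `σ_1(γ) → ∞` forces `σ_{k-1}(γ) → ∞` by Newton's inequalities, and
`∑ i, μ i σ_{k-1,i}(γ)` equals the former minus `t (n-k+1) σ_{k-1}(γ)`.
-/

open Finset Function Filter Topology

section Newton

open Polynomial

theorem splits_derivative {p : ℝ[X]} (hp : p.Splits) : (derivative p).Splits := by
  rw [splits_iff_card_roots] at hp ⊢
  by_cases hdeg : p.natDegree = 0
  · obtain ⟨c, rfl⟩ := natDegree_eq_zero.mp hdeg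
    simp
  · have := card_roots_le_derivative p
    have := card_roots' (derivative p)
    have := natDegree_derivative_lt hdeg
    omega

theorem splits_iterate_derivative {p : ℝ[X]} (hp : p.Splits) (m : ℕ) :
    (derivative^[m] p).Splits := by
  induction m with
  | zero => exact hp
  | succ m ih => simpa only [iterate_succ_apply'] using splits_derivative ih

theorem eval_mul_eval_derivative_derivative_le_sq {K : Type*} [Field K] [LinearOrder K]
    [IsStrictOrderedRing K] {p : K[X]} (hp : p.Splits) (t : K) :
    p.eval t * (derivative (derivative p)).eval t ≤ (derivative p).eval t ^ 2 := by
  induction hp using Submonoid.closure_induction with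
  | mem p hp => rcases hp with ⟨c, rfl⟩ | ⟨c, rfl⟩ <;> simp
  | one => simp
  | mul p q _ _ hp hq =>
    simp only [derivative_mul, derivative_add, eval_add, eval_mul]
    linear_combination eval t q ^ 2 * hp + eval t p ^ 2 * hq

theorem add_two_mul_coeff_mul_coeff_le {p : ℝ[X]} (hp : p.Splits) (m : ℕ) :
    (m + 2) * (p.coeff m * p.coeff (m + 2)) ≤ (m + 1) * p.coeff (m + 1) ^ 2 := by
  have h := eval_mul_eval_derivative_derivative_le_sq (splits_iterate_derivative hp m) 0
  simp only [← iterate_succ_apply' (⇑derivative), ← coeff_zero_eq_eval_zero,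
    coeff_iterate_derivative, zero_add, Nat.descFactorial_self, nsmul_eq_mul,
    Nat.factorial_succ, Nat.cast_mul] at h
  push_cast at h
  have hfac : (0 : ℝ) < (m.factorial : ℝ) ^ 2 * (m + 1) := by positivity
  refine le_of_mul_le_mul_left ?_ hfac
  linear_combination h

theorem coeff_mul_coeff_le_sq {p : ℝ[X]} (hp : p.Splits) (m : ℕ) :
    p.coeff m * p.coeff (m + 2) ≤ p.coeff (m + 1) ^ 2 := by
  have h := add_two_mul_coeff_mul_coeff_le hp m
  by_contra! hlt
  have : 0 < p.coeff m * p.coeff (m + 2) := (sq_nonneg _).trans_lt hlt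
  have : (m + 1 : ℝ) * p.coeff (m + 1) ^ 2 < (m + 1) * (p.coeff m * p.coeff (m + 2)) := by gcongr
  linarith

theorem multiset_esymm_mul_esymm_le_sq (s : Multiset ℝ) (j : ℕ) :
    s.esymm j * s.esymm (j + 2) ≤ s.esymm (j + 1) ^ 2 := by
  rcases lt_or_ge (Multiset.card s) (j + 2) with hlt | hle
  · have hzero : s.esymm (j + 2) = 0 := by
      simp [Multiset.esymm, Multiset.powersetCard_eq_empty _ hlt]
    rw [hzero, mul_zero]
    positivity
  · obtain ⟨d, hd⟩ := Nat.exists_eq_add_of_le' hle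
    have hsplits : (s.map fun r => X + C r).prod.Splits :=
      Splits.multisetProd fun p hp => by
        obtain ⟨r, -, rfl⟩ := Multiset.mem_map.mp hp
        exact Splits.X_add_C r
    have h := coeff_mul_coeff_le_sq hsplits d
    rwa [Multiset.prod_X_add_C_coeff _ (by omega), Multiset.prod_X_add_C_coeff _ (by omega),
      Multiset.prod_X_add_C_coeff _ (by omega), show Multiset.card s - d = j + 2 by omega,
      show Multiset.card s - (d + 1) = j + 1 by omega,
      show Multiset.card s - (d + 2) = j by omega, mul_comm] at h

end Newton

theorem multiset_esymm_cons_succ {R : Type*} [CommSemiring R] (a : R) (s : Multiset R) (j : ℕ) :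
    (a ::ₘ s).esymm (j + 1) = s.esymm (j + 1) + a * s.esymm j := by
  simp [Multiset.esymm, Multiset.powersetCard_cons, Multiset.sum_map_mul_left]

theorem multiset_esymm_zero_cons {R : Type*} [CommSemiring R] (s : Multiset R) (j : ℕ) :
    (0 ::ₘ s).esymm j = s.esymm j := by
  cases j with
  | zero => simp [Multiset.esymm]
  | succ j => rw [multiset_esymm_cons_succ, zero_mul, add_zero]

section Esymm

variable {n : ℕ}

theorem esymm_eq_multiset_esymm (j : ℕ) (x : Fin n → ℝ) :
    esymm n j x = (univ.val.map x).esymm j :=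
  (Finset.esymm_map_val x univ j).symm

theorem esymm_mul_esymm_le_sq (j : ℕ) (x : Fin n → ℝ) :
    esymm n j x * esymm n (j + 2) x ≤ esymm n (j + 1) x ^ 2 := by
  simpa only [esymm_eq_multiset_esymm] using multiset_esymm_mul_esymm_le_sq _ j

theorem esymm_zero (x : Fin n → ℝ) : esymm n 0 x = 1 := by
  simp [esymm]

theorem esymm_one (x : Fin n → ℝ) : esymm n 1 x = ∑ i, x i := by
  simp [esymm, powersetCard_one]

theorem esymm_nonneg (j : ℕ) {x : Fin n → ℝ} (hx : 0 ≤ x) : 0 ≤ esymm n j x :=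
  sum_nonneg fun _ _ => prod_nonneg fun i _ => hx i

theorem esymm_smul (j : ℕ) (c : ℝ) (x : Fin n → ℝ) :
    esymm n j (c • x) = c ^ j * esymm n j x := by
  rw [esymm, esymm, mul_sum]
  refine sum_congr rfl fun s hs => ?_
  simp [prod_mul_distrib, (mem_powersetCard.mp hs).2]

theorem differentiable_esymm (j : ℕ) : Differentiable ℝ (esymm n j) := by
  unfold esymm
  fun_prop

theorem continuous_esymm (j : ℕ) : Continuous (esymm n j) :=
  (differentiable_esymm j).continuous

theorem map_univ_val_update (x : Fin n → ℝ) (i : Fin n) (a : ℝ) :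
    univ.val.map (update x i a) = a ::ₘ (univ.erase i).val.map x := by
  rw [← insert_erase (mem_univ i), insert_val_of_notMem (notMem_erase i univ), Multiset.map_cons,
    update_self, erase_insert (notMem_erase i univ)]
  congr 1
  exact Multiset.map_congr rfl fun l hl => update_of_ne (ne_of_mem_erase (mem_val.mp hl)) a x

theorem esymm_succ_eq_add_mul (j : ℕ) (x : Fin n → ℝ) (i : Fin n) :
    esymm n (j + 1) x = esymm n (j + 1) (update x i 0) + x i * esymm n j (update x i 0) := by
  nth_rw 1 [← update_eq_self i x]
  simp only [esymm_eq_multiset_esymm, map_univ_val_update, multiset_esymm_zero_cons,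
    multiset_esymm_cons_succ, zero_mul, add_zero]

/-- The gradient of `σ_{k+1}` at `x`: its `i`-th entry is the paper's `σ_{k,i}(x)`. -/
def esymmGrad (n k : ℕ) (x : Fin n → ℝ) : Fin n → ℝ := fun i => esymm n k (update x i 0)

theorem fderiv_esymm_single (k : ℕ) (x : Fin n → ℝ) (i : Fin n) :
    fderiv ℝ (esymm n (k + 1)) x (Pi.single i 1) = esymmGrad n k x i := by
  have haffine : esymm n (k + 1) ∘ update x i =
      fun t => esymm n (k + 1) (update x i 0) + t * esymmGrad n k x i := by
    ext t
    simpa [esymmGrad] using esymm_succ_eq_add_mul k (update x i t) i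
  have hchain : HasDerivAt (esymm n (k + 1) ∘ update x i)
      (fderiv ℝ (esymm n (k + 1)) x (Pi.single i 1)) (x i) :=
    HasFDerivAt.comp_hasDerivAt (x i)
      (by simpa using (differentiable_esymm (k + 1) x).hasFDerivAt) (hasDerivAt_update x i (x i))
  rw [haffine] at hchain
  refine hchain.unique ?_
  simpa using ((hasDerivAt_id (x i)).mul_const (esymmGrad n k x i)).const_add
    (esymm n (k + 1) (update x i 0))

theorem fderiv_esymm_apply (k : ℕ) (x v : Fin n → ℝ) :
    fderiv ℝ (esymm n (k + 1)) x v = v ⬝ᵥ esymmGrad n k x := by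
  conv_lhs => rw [pi_eq_sum_univ' v]
  simp [dotProduct, ← fderiv_esymm_single]

theorem hasDerivAt_esymm_add_smul (k : ℕ) (x v : Fin n → ℝ) (s : ℝ) :
    HasDerivAt (fun s : ℝ => esymm n (k + 1) (x + s • v))
      (v ⬝ᵥ esymmGrad n k (x + s • v)) s := by
  have hline : HasDerivAt (fun s : ℝ => x + s • v) v s := by
    simpa using ((hasDerivAt_id s).smul_const v).const_add x
  rw [← fderiv_esymm_apply]
  exact (differentiable_esymm (k + 1) _).hasFDerivAt.comp_hasDerivAt s hline

theorem dotProduct_esymmGrad_self (k : ℕ) (x : Fin n → ℝ) :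
    x ⬝ᵥ esymmGrad n k x = (k + 1 : ℕ) * esymm n (k + 1) x := by
  have h := hasDerivAt_esymm_add_smul k 0 x 1
  simp only [zero_add, one_smul, esymm_smul] at h
  refine h.unique ?_
  simpa using (hasDerivAt_pow (k + 1) (1 : ℝ)).mul_const (esymm n (k + 1) x)

theorem one_dotProduct_esymmGrad (k : ℕ) (x : Fin n → ℝ) :
    1 ⬝ᵥ esymmGrad n k x = (n - k) * esymm n k x := by
  cases k with
  | zero => simp [esymmGrad, esymm_zero, one_dotProduct]
  | succ k =>
    have hentry (i : Fin n) :
        esymmGrad n (k + 1) x i = esymm n (k + 1) x - x i * esymmGrad n k x i :=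
      eq_sub_of_add_eq (esymm_succ_eq_add_mul k x i).symm
    simp_rw [one_dotProduct, hentry, sum_sub_distrib]
    rw [← dotProduct, dotProduct_esymmGrad_self]
    simp [sub_mul]

theorem esymm_one_sq (x : Fin n → ℝ) : esymm n 1 x ^ 2 = x ⬝ᵥ x + 2 * esymm n 2 x := by
  have hgrad : esymmGrad n 1 x = esymm n 1 x • 1 - x := by
    ext i
    have := esymm_succ_eq_add_mul 0 x i
    simp only [zero_add, esymm_zero, mul_one] at this
    simp [esymmGrad, this]
  have h := dotProduct_esymmGrad_self 1 x
  rw [hgrad, dotProduct_sub, dotProduct_smul, dotProduct_one, ← esymm_one, smul_eq_mul] at h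
  push_cast at h
  linear_combination h

theorem esymm_add_two_single (j : ℕ) (i : Fin n) (a : ℝ) : esymm n (j + 2) (Pi.single i a) = 0 := by
  have hzero (l : ℕ) : esymm n (l + 1) 0 = 0 := by simpa using esymm_smul (l + 1) 0 (0 : Fin n → ℝ)
  have hupdate : update (Pi.single i a) i 0 = (0 : Fin n → ℝ) := by simp [Pi.single]
  rw [esymm_succ_eq_add_mul _ _ i, hupdate, hzero, hzero, mul_zero, add_zero]

theorem tendsto_esymm_add_smul_one (j : ℕ) (x : Fin n → ℝ) :
    Tendsto (fun ε : ℝ => esymm n j (x + ε • 1)) (𝓝[>] 0) (𝓝 (esymm n j x)) := by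
  have hcont : Continuous fun ε : ℝ => esymm n j (x + ε • 1) :=
    (continuous_esymm j).comp (by fun_prop)
  simpa using (hcont.tendsto 0).mono_left nhdsWithin_le_nhds

theorem tendsto_esymm_add_smul_one_rpow (j : ℕ) (x : Fin n → ℝ) {p : ℝ} (hp : 0 ≤ p) :
    Tendsto (fun ε : ℝ => esymm n j (x + ε • 1) ^ p) (𝓝[>] 0) (𝓝 (esymm n j x ^ p)) :=
  (tendsto_esymm_add_smul_one j x).rpow_const (Or.inr hp)

end Esymm

section Cone

variable {n k : ℕ} {x y : Fin n → ℝ}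

/-- Gårding's open cone `Γ_k`. Admitting `j = 0` changes nothing, as `σ₀ = 1`. -/
def gardingCone (n k : ℕ) : Set (Fin n → ℝ) := {x | ∀ j ≤ k, 0 < esymm n j x}

/-- The closed cone `closure(Γ_k)`, encoded by the weak inequalities `σ_j ≥ 0` for `j ≤ k`. -/
def closedGardingCone (n k : ℕ) : Set (Fin n → ℝ) := {x | ∀ j ≤ k, 0 ≤ esymm n j x}

theorem mem_gardingCone_iff : x ∈ gardingCone n k ↔ ∀ j, 1 ≤ j → j ≤ k → 0 < esymm n j x := by
  refine ⟨fun hx j _ hj => hx j hj, fun hx j hj => ?_⟩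
  rcases j.eq_zero_or_pos with rfl | hpos
  · exact (esymm_zero x).symm ▸ one_pos
  · exact hx j hpos hj

theorem mem_closedGardingCone_iff :
    x ∈ closedGardingCone n k ↔ ∀ j, 1 ≤ j → j ≤ k → 0 ≤ esymm n j x := by
  refine ⟨fun hx j _ hj => hx j hj, fun hx j hj => ?_⟩
  rcases j.eq_zero_or_pos with rfl | hpos
  · exact (esymm_zero x).symm ▸ zero_le_one
  · exact hx j hpos hj

theorem gardingCone_anti {l : ℕ} (hkl : k ≤ l) : gardingCone n l ⊆ gardingCone n k :=
  fun _ hx j hj => hx j (hj.trans hkl)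

theorem gardingCone_subset_closedGardingCone : gardingCone n k ⊆ closedGardingCone n k :=
  fun _ hx j hj => (hx j hj).le

theorem mem_gardingCone_zero (x : Fin n → ℝ) : x ∈ gardingCone n 0 :=
  mem_gardingCone_iff.mpr fun _ h1 h0 => by omega

theorem mem_gardingCone_succ :
    x ∈ gardingCone n (k + 1) ↔ x ∈ gardingCone n k ∧ 0 < esymm n (k + 1) x := by
  refine ⟨fun hx => ⟨gardingCone_anti k.le_succ hx, hx _ le_rfl⟩, fun hx j hj => ?_⟩
  rcases hj.lt_or_eq with hlt | rfl
  · exact hx.1 j (Nat.lt_succ_iff.mp hlt)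
  · exact hx.2

theorem smul_mem_gardingCone (hx : x ∈ gardingCone n k) {c : ℝ} (hc : 0 < c) :
    c • x ∈ gardingCone n k := fun j hj => by
  rw [esymm_smul]
  exact mul_pos (pow_pos hc j) (hx j hj)

theorem isOpen_gardingCone : IsOpen (gardingCone n k) := by
  have hinter : gardingCone n k = ⋂ j ∈ Set.Iic k, {x | 0 < esymm n j x} := by
    ext
    simp [gardingCone]
  rw [hinter]
  exact (Set.finite_Iic k).isOpen_biInter fun j _ =>
    isOpen_lt continuous_const (continuous_esymm j)

theorem isClosed_closedGardingCone : IsClosed (closedGardingCone n k) := by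
  have hinter : closedGardingCone n k = ⋂ j ∈ Set.Iic k, {x | 0 ≤ esymm n j x} := by
    ext
    simp [closedGardingCone]
  rw [hinter]
  exact isClosed_biInter fun j _ => isClosed_le continuous_const (continuous_esymm j)

theorem update_mem_gardingCone (hx : x ∈ gardingCone n (k + 1)) (i : Fin n) :
    update x i 0 ∈ gardingCone n k := by
  induction k with
  | zero => exact mem_gardingCone_zero _
  | succ k ih =>
    have hu := ih (gardingCone_anti (k + 1).le_succ hx)
    refine mem_gardingCone_succ.mpr ⟨hu, ?_⟩
    by_contra! hnonpos
    have hk := hu k le_rfl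
    have h1 := hx (k + 1) (by omega)
    have h2 := hx (k + 2) le_rfl
    rw [esymm_succ_eq_add_mul _ x i] at h1 h2
    set a := esymm n k (update x i 0)
    set b := esymm n (k + 1) (update x i 0)
    set c := esymm n (k + 2) (update x i 0)
    have hnewton : a * c ≤ b ^ 2 := esymm_mul_esymm_le_sq k (update x i 0)
    have hcontra : 0 < b * (b + x i * a) :=
      calc 0 < a * (c + x i * b) := mul_pos hk h2
        _ = a * c + x i * (a * b) := by ring
        _ ≤ b ^ 2 + x i * (a * b) := by gcongr
        _ = b * (b + x i * a) := by ring
    exact hcontra.not_ge (mul_nonpos_of_nonpos_of_nonneg hnonpos h1.le)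

theorem esymmGrad_pos (hx : x ∈ gardingCone n (k + 1)) (i : Fin n) : 0 < esymmGrad n k x i :=
  update_mem_gardingCone hx i k le_rfl

theorem dotProduct_esymmGrad_mono (hx : x ∈ gardingCone n (k + 1)) {v w : Fin n → ℝ}
    (hvw : v ≤ w) : v ⬝ᵥ esymmGrad n k x ≤ w ⬝ᵥ esymmGrad n k x :=
  dotProduct_le_dotProduct_of_nonneg_right hvw fun i => (esymmGrad_pos hx i).le

theorem esymm_succ_le_esymm_one_mul (hx : x ∈ gardingCone n k) :
    esymm n (k + 1) x ≤ esymm n 1 x * esymm n k x := by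
  induction k with
  | zero => simp [esymm_zero]
  | succ k ih =>
    obtain ⟨hxk, hpos⟩ := mem_gardingCone_succ.mp hx
    have hk := hxk k le_rfl
    refine le_of_mul_le_mul_left ?_ hk
    calc esymm n k x * esymm n (k + 2) x ≤ esymm n (k + 1) x ^ 2 := esymm_mul_esymm_le_sq k x
      _ ≤ (esymm n 1 x * esymm n k x) * esymm n (k + 1) x := by rw [sq]; gcongr; exact ih hxk
      _ = esymm n k x * (esymm n 1 x * esymm n (k + 1) x) := by ring

theorem esymm_one_mul_pow_le_pow {m : ℕ} (hx : x ∈ gardingCone n (m + 2)) :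
    esymm n 1 x * esymm n (m + 2) x ^ m ≤ esymm n (m + 1) x ^ (m + 1) := by
  induction m with
  | zero => simp
  | succ m ih =>
    have hx' := gardingCone_anti (m + 2).le_succ hx
    have h1 := hx 1 (by omega)
    have h2 := hx (m + 1) (by omega)
    have h3 := hx (m + 2) (by omega)
    have h4 := hx (m + 3) le_rfl
    refine le_of_mul_le_mul_left ?_ (pow_pos h2 (m + 1))
    calc esymm n (m + 1) x ^ (m + 1) * (esymm n 1 x * esymm n (m + 3) x ^ (m + 1))
        = esymm n 1 x * (esymm n (m + 1) x * esymm n (m + 3) x) ^ (m + 1) := by ring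
      _ ≤ esymm n 1 x * (esymm n (m + 2) x ^ 2) ^ (m + 1) := by
          gcongr
          exact esymm_mul_esymm_le_sq (m + 1) x
      _ = (esymm n 1 x * esymm n (m + 2) x ^ m) * esymm n (m + 2) x ^ (m + 2) := by ring
      _ ≤ esymm n (m + 1) x ^ (m + 1) * esymm n (m + 2) x ^ (m + 2) := by gcongr; exact ih hx'

end Cone

section Ratio

variable {n k : ℕ} {x y : Fin n → ℝ}

/-- The quotient `σ_{k+1} / σ_k`, which is homogeneous of degree one and concave on `Γ_k`. -/
noncomputable def esymmRatio (n k : ℕ) (x : Fin n → ℝ) : ℝ := esymm n (k + 1) x / esymm n k x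

theorem esymmRatio_pos (hx : x ∈ gardingCone n (k + 1)) : 0 < esymmRatio n k x :=
  div_pos (hx (k + 1) le_rfl) (hx k k.le_succ)

theorem esymmRatio_smul (k : ℕ) {c : ℝ} (hc : c ≠ 0) (x : Fin n → ℝ) :
    esymmRatio n k (c • x) = c * esymmRatio n k x := by
  rw [esymmRatio, esymmRatio, esymm_smul, esymm_smul, pow_succ', mul_assoc, mul_div_assoc,
    mul_div_mul_left _ _ (pow_ne_zero k hc)]

theorem prod_range_esymmRatio (hx : x ∈ gardingCone n k) :
    ∏ j ∈ range k, esymmRatio n j x = esymm n k x := by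
  induction k with
  | zero => simp [esymm_zero]
  | succ k ih =>
    have hk := hx k k.le_succ
    rw [prod_range_succ, ih (gardingCone_anti k.le_succ hx), esymmRatio, mul_div_cancel₀ _ hk.ne']

theorem add_esymmRatio_update (hx : x ∈ gardingCone n (k + 1)) (i : Fin n) :
    x i + esymmRatio n k (update x i 0) = esymm n (k + 1) x / esymmGrad n k x i := by
  have hgrad : esymm n k (update x i 0) ≠ 0 := (esymmGrad_pos hx i).ne'
  rw [esymmRatio, esymmGrad, esymm_succ_eq_add_mul k x i, add_div, mul_div_cancel_right₀ _ hgrad,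
    add_comm]

theorem add_esymmRatio_update_pos (hx : x ∈ gardingCone n (k + 1)) (i : Fin n) :
    0 < x i + esymmRatio n k (update x i 0) := by
  rw [add_esymmRatio_update hx]
  exact div_pos (hx _ le_rfl) (esymmGrad_pos hx i)

theorem add_two_mul_esymmRatio_succ (hx : x ∈ gardingCone n (k + 1)) :
    (k + 2 : ℕ) * esymmRatio n (k + 1) x =
      ∑ i, (x i - x i ^ 2 / (x i + esymmRatio n k (update x i 0))) := by
  have hpos := hx (k + 1) le_rfl
  rw [esymmRatio, ← mul_div_assoc, ← dotProduct_esymmGrad_self, dotProduct, sum_div]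
  refine sum_congr rfl fun i _ => ?_
  have hentry : esymmGrad n (k + 1) x i = esymm n (k + 1) x - x i * esymmGrad n k x i :=
    eq_sub_of_add_eq (esymm_succ_eq_add_mul k x i).symm
  rw [add_esymmRatio_update hx, hentry]
  field_simp

theorem add_sq_div_le_add {a b c d e : ℝ} (hc : 0 < c) (hd : 0 < d) (h : c + d ≤ e) :
    (a + b) ^ 2 / e ≤ a ^ 2 / c + b ^ 2 / d := by
  have htitu := sq_sum_div_le_sum_sq_div univ ![a, b] (g := ![c, d])
    (by simp [Fin.forall_fin_two, hc, hd])
  simp only [Fin.sum_univ_two, Matrix.cons_val_zero, Matrix.cons_val_one] at htitu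
  exact (div_le_div_of_nonneg_left (sq_nonneg _) (add_pos hc hd) h).trans htitu

theorem esymmRatio_succ_add_le (hx : x ∈ gardingCone n (k + 1)) (hy : y ∈ gardingCone n (k + 1))
    (hxy : x + y ∈ gardingCone n (k + 1))
    (hupdate : ∀ i, esymmRatio n k (update x i 0) + esymmRatio n k (update y i 0) ≤
      esymmRatio n k (update (x + y) i 0)) :
    esymmRatio n (k + 1) x + esymmRatio n (k + 1) y ≤ esymmRatio n (k + 1) (x + y) := by
  refine le_of_mul_le_mul_left ?_ (by positivity : (0 : ℝ) < (k + 2 : ℕ))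
  rw [mul_add, add_two_mul_esymmRatio_succ hx, add_two_mul_esymmRatio_succ hy,
    add_two_mul_esymmRatio_succ hxy, ← sum_add_distrib]
  refine sum_le_sum fun i _ => ?_
  have htitu := add_sq_div_le_add (a := x i) (b := y i)
    (e := (x + y) i + esymmRatio n k (update (x + y) i 0)) (add_esymmRatio_update_pos hx i)
    (add_esymmRatio_update_pos hy i) (by linarith [hupdate i, Pi.add_apply x y i])
  rw [Pi.add_apply] at htitu ⊢
  linarith

theorem add_mem_gardingCone_and_esymmRatio_add_le (hx : x ∈ gardingCone n k)
    (hy : y ∈ gardingCone n k) :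
    x + y ∈ gardingCone n k ∧ esymmRatio n k x + esymmRatio n k y ≤ esymmRatio n k (x + y) := by
  induction k generalizing x y with
  | zero =>
    exact ⟨mem_gardingCone_zero _, by simp [esymmRatio, esymm_zero, esymm_one, sum_add_distrib]⟩
  | succ k ih =>
    obtain ⟨hadd, hratio⟩ := ih (gardingCone_anti k.le_succ hx) (gardingCone_anti k.le_succ hy)
    have hpos : 0 < esymmRatio n k (x + y) :=
      (add_pos (esymmRatio_pos hx) (esymmRatio_pos hy)).trans_le hratio
    have hxy : x + y ∈ gardingCone n (k + 1) :=
      mem_gardingCone_succ.mpr ⟨hadd, (div_pos_iff_of_pos_right (hadd k le_rfl)).mp hpos⟩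
    refine ⟨hxy, esymmRatio_succ_add_le hx hy hxy fun i => ?_⟩
    have hupdate := (ih (update_mem_gardingCone hx i) (update_mem_gardingCone hy i)).2
    rwa [← update_add, add_zero] at hupdate

theorem add_mem_gardingCone (hx : x ∈ gardingCone n k) (hy : y ∈ gardingCone n k) :
    x + y ∈ gardingCone n k :=
  (add_mem_gardingCone_and_esymmRatio_add_le hx hy).1

theorem esymmRatio_add_le (hx : x ∈ gardingCone n k) (hy : y ∈ gardingCone n k) :
    esymmRatio n k x + esymmRatio n k y ≤ esymmRatio n k (x + y) :=
  (add_mem_gardingCone_and_esymmRatio_add_le hx hy).2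

end Ratio

section GardingInequality

variable {n k : ℕ} {x y : Fin n → ℝ}

theorem one_add_sum_le_prod_one_add {ι : Type*} (s : Finset ι) {f : ι → ℝ}
    (hf : ∀ i ∈ s, 0 ≤ f i) : 1 + ∑ i ∈ s, f i ≤ ∏ i ∈ s, (1 + f i) := by
  induction s using Finset.cons_induction with
  | empty => simp
  | cons a s ha ih =>
    rw [forall_mem_cons] at hf
    rw [sum_cons, prod_cons]
    have hsum := sum_nonneg hf.2
    calc 1 + (f a + ∑ i ∈ s, f i) ≤ (1 + f a) * (1 + ∑ i ∈ s, f i) := by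
          linarith [mul_nonneg hf.1 hsum]
      _ ≤ (1 + f a) * ∏ i ∈ s, (1 + f i) :=
          mul_le_mul_of_nonneg_left (ih hf.2) (add_nonneg zero_le_one hf.1)

theorem esymm_mul_one_add_sum_le (hx : x ∈ gardingCone n k) (hy : y ∈ gardingCone n k) :
    esymm n k x * (1 + ∑ j ∈ range k, esymmRatio n j y / esymmRatio n j x) ≤
      esymm n k (x + y) := by
  have hpos {z : Fin n → ℝ} (hz : z ∈ gardingCone n k) (j : ℕ) (hj : j ∈ range k) :
      0 < esymmRatio n j z :=
    esymmRatio_pos (gardingCone_anti (Nat.succ_le_of_lt (mem_range.mp hj)) hz)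
  calc esymm n k x * (1 + ∑ j ∈ range k, esymmRatio n j y / esymmRatio n j x)
      ≤ esymm n k x * ∏ j ∈ range k, (1 + esymmRatio n j y / esymmRatio n j x) :=
        mul_le_mul_of_nonneg_left (one_add_sum_le_prod_one_add _ fun j hj =>
          (div_pos (hpos hy j hj) (hpos hx j hj)).le) (hx k le_rfl).le
    _ = ∏ j ∈ range k, (esymmRatio n j x + esymmRatio n j y) := by
        rw [← prod_range_esymmRatio hx, ← prod_mul_distrib]
        refine prod_congr rfl fun j hj => ?_
        rw [mul_add, mul_one, mul_div_cancel₀ _ (hpos hx j hj).ne']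
    _ ≤ ∏ j ∈ range k, esymmRatio n j (x + y) :=
        prod_le_prod (fun j hj => (add_pos (hpos hx j hj) (hpos hy j hj)).le) fun j hj =>
          esymmRatio_add_le (gardingCone_anti (mem_range.mp hj).le hx)
            (gardingCone_anti (mem_range.mp hj).le hy)
    _ = esymm n k (x + y) := prod_range_esymmRatio (add_mem_gardingCone hx hy)

theorem esymm_mul_sum_esymmRatio_div_le (hx : x ∈ gardingCone n (k + 1))
    (hy : y ∈ gardingCone n (k + 1)) :
    esymm n (k + 1) x * ∑ j ∈ range (k + 1), esymmRatio n j y / esymmRatio n j x ≤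
      y ⬝ᵥ esymmGrad n k x := by
  have hslope : Tendsto (fun s : ℝ => s⁻¹ * (esymm n (k + 1) (x + s • y) - esymm n (k + 1) x))
      (𝓝[>] 0) (𝓝 (y ⬝ᵥ esymmGrad n k x)) := by
    simpa using (hasDerivAt_esymm_add_smul k x y 0).tendsto_slope_zero_right
  refine ge_of_tendsto hslope ?_
  filter_upwards [self_mem_nhdsWithin] with s (hs : 0 < s)
  have hle := esymm_mul_one_add_sum_le hx (smul_mem_gardingCone hy hs)
  simp only [esymmRatio_smul _ hs.ne', mul_div_assoc, ← mul_sum] at hle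
  rw [inv_mul_eq_div, le_div_iff₀ hs]
  linarith

theorem garding_inequality (hx : x ∈ gardingCone n (k + 1)) (hy : y ∈ gardingCone n (k + 1)) :
    (k + 1 : ℕ) * (esymm n (k + 1) y ^ (1 / (k + 1 : ℕ) : ℝ) *
      esymm n (k + 1) x ^ (k / (k + 1 : ℕ) : ℝ)) ≤ y ⬝ᵥ esymmGrad n k x := by
  have hσx := hx (k + 1) le_rfl
  have hσy := hy (k + 1) le_rfl
  have hk : (0 : ℝ) < (k + 1 : ℕ) := by positivity
  have hratio (j : ℕ) (hj : j ∈ range (k + 1)) : 0 ≤ esymmRatio n j y / esymmRatio n j x :=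
    have hle : j + 1 ≤ k + 1 := mem_range.mp hj
    (div_pos (esymmRatio_pos (gardingCone_anti hle hy))
      (esymmRatio_pos (gardingCone_anti hle hx))).le
  have hamgm : (k + 1 : ℕ) * (esymm n (k + 1) y / esymm n (k + 1) x) ^ (1 / (k + 1 : ℕ) : ℝ) ≤
      ∑ j ∈ range (k + 1), esymmRatio n j y / esymmRatio n j x := by
    have h := Real.geom_mean_le_arith_mean (range (k + 1)) (fun _ => 1) _
      (fun _ _ => zero_le_one) (by simpa using hk) hratio
    simp only [Real.rpow_one, one_mul, sum_const, card_range, nsmul_eq_mul, mul_one,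
      prod_div_distrib, prod_range_esymmRatio hx, prod_range_esymmRatio hy] at h
    rwa [le_div_iff₀' hk, ← one_div] at h
  refine le_trans ?_ (esymm_mul_sum_esymmRatio_div_le hx hy)
  calc (k + 1 : ℕ) * (esymm n (k + 1) y ^ (1 / (k + 1 : ℕ) : ℝ) *
        esymm n (k + 1) x ^ (k / (k + 1 : ℕ) : ℝ))
      = esymm n (k + 1) x *
        ((k + 1 : ℕ) * (esymm n (k + 1) y / esymm n (k + 1) x) ^ (1 / (k + 1 : ℕ) : ℝ)) := by
        have hexp : (k / (k + 1 : ℕ) : ℝ) = 1 - 1 / (k + 1 : ℕ) := by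
          field_simp
          push_cast
          ring
        rw [hexp, Real.rpow_sub hσx, Real.rpow_one, Real.div_rpow hσy.le hσx.le]
        ring
    _ ≤ _ := mul_le_mul_of_nonneg_left hamgm hσx.le

end GardingInequality

section ClosedCone

variable {n k : ℕ} {x y : Fin n → ℝ}

theorem add_smul_one_mem_gardingCone (hkn : k ≤ n) (hx : x ∈ closedGardingCone n k) {ε : ℝ}
    (hε : 0 < ε) : x + ε • 1 ∈ gardingCone n k := by
  induction k generalizing ε with
  | zero => exact mem_gardingCone_zero _
  | succ k ih =>
    have ih' {s : ℝ} (hs : 0 < s) : x + s • 1 ∈ gardingCone n k :=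
      ih (k.le_succ.trans hkn) (fun j hj => hx j (hj.trans k.le_succ)) hs
    refine mem_gardingCone_succ.mpr ⟨ih' hε, ?_⟩
    have hderiv := hasDerivAt_esymm_add_smul k x 1
    have hmono : StrictMonoOn (fun s : ℝ => esymm n (k + 1) (x + s • 1)) (Set.Ici 0) := by
      refine strictMonoOn_of_deriv_pos (convex_Ici 0)
        (fun s _ => (hderiv s).continuousAt.continuousWithinAt) fun s hs => ?_
      rw [interior_Ici, Set.mem_Ioi] at hs
      rw [(hderiv s).deriv, one_dotProduct_esymmGrad]
      exact mul_pos (sub_pos.mpr (Nat.cast_lt.mpr hkn)) (ih' hs k le_rfl)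
    have hlt := hmono Set.self_mem_Ici hε.le hε
    simp only [zero_smul, add_zero] at hlt
    exact (hx (k + 1) le_rfl).trans_lt hlt

theorem mem_gardingCone_of_esymm_pos (hkn : k ≤ n) (hx : x ∈ closedGardingCone n k)
    (hpos : 0 < esymm n k x) : x ∈ gardingCone n k := by
  induction k with
  | zero => exact mem_gardingCone_zero _
  | succ k ih =>
    have hxk : x ∈ closedGardingCone n k := fun j hj => hx j (hj.trans k.le_succ)
    have hkn' := k.le_succ.trans hkn
    have hle : esymm n (k + 1) x ≤ esymm n 1 x * esymm n k x := by
      refine le_of_tendsto_of_tendsto (tendsto_esymm_add_smul_one _ x)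
        ((tendsto_esymm_add_smul_one _ x).mul (tendsto_esymm_add_smul_one _ x)) ?_
      filter_upwards [self_mem_nhdsWithin] with ε hε
      exact esymm_succ_le_esymm_one_mul (add_smul_one_mem_gardingCone hkn' hxk hε)
    refine mem_gardingCone_succ.mpr ⟨ih hkn' hxk ((hxk k le_rfl).lt_of_ne' fun hzero => ?_), hpos⟩
    rw [hzero, mul_zero] at hle
    exact hle.not_gt hpos

theorem garding_inequality_of_mem_closedGardingCone (hkn : k + 1 ≤ n)
    (hx : x ∈ gardingCone n (k + 1)) (hy : y ∈ closedGardingCone n (k + 1)) :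
    (k + 1 : ℕ) * (esymm n (k + 1) y ^ (1 / (k + 1 : ℕ) : ℝ) *
      esymm n (k + 1) x ^ (k / (k + 1 : ℕ) : ℝ)) ≤ y ⬝ᵥ esymmGrad n k x := by
  have hright : Tendsto (fun ε : ℝ => (y + ε • 1) ⬝ᵥ esymmGrad n k x) (𝓝[>] 0)
      (𝓝 (y ⬝ᵥ esymmGrad n k x)) := by
    have hcont : Continuous fun ε : ℝ => (y + ε • 1) ⬝ᵥ esymmGrad n k x := by
      simp only [add_dotProduct, smul_dotProduct]
      fun_prop
    simpa using (hcont.tendsto 0).mono_left nhdsWithin_le_nhds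
  have hleft := ((tendsto_esymm_add_smul_one_rpow (k + 1) y (p := 1 / (k + 1 : ℕ))
    (by positivity)).mul_const (esymm n (k + 1) x ^ (k / (k + 1 : ℕ) : ℝ))).const_mul
      ((k + 1 : ℕ) : ℝ)
  refine le_of_tendsto_of_tendsto hleft hright ?_
  filter_upwards [self_mem_nhdsWithin] with ε hε
  exact garding_inequality hx (add_smul_one_mem_gardingCone hkn hy hε)

theorem mem_closedGardingCone_of_nonneg (hx : 0 ≤ x) : x ∈ closedGardingCone n k :=
  fun j _ => esymm_nonneg j hx

theorem exists_add_smul_one_mem_and_esymm_eq_zero (hkn : k ≤ n) (hx : x ∉ closedGardingCone n k) :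
    ∃ t : ℝ, 0 < t ∧ x + t • 1 ∈ closedGardingCone n k ∧ esymm n k (x + t • 1) = 0 := by
  set S : Set ℝ := {t | x + t • 1 ∈ closedGardingCone n k} with hS
  have hcont : Continuous fun t : ℝ => x + t • (1 : Fin n → ℝ) := by fun_prop
  have hclosed : IsClosed S := isClosed_closedGardingCone.preimage hcont
  have hmem : ‖x‖ ∈ S := mem_closedGardingCone_of_nonneg fun i => by
    simpa using neg_le_iff_add_nonneg.mp (neg_le_of_abs_le (norm_le_pi_norm x i))
  have hzero : (0 : ℝ) ∉ S := by simpa [hS] using hx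
  obtain ⟨t, ht⟩ : (frontier S).Nonempty :=
    nonempty_frontier_iff.mpr ⟨⟨_, hmem⟩, (Set.ne_univ_iff_exists_notMem S).mpr ⟨0, hzero⟩⟩
  have htS : t ∈ S := hclosed.frontier_subset ht
  refine ⟨t, lt_of_not_ge fun htle => ?_, htS, ((htS k le_rfl).eq_of_not_lt fun hpos => ?_).symm⟩
  · rcases htle.eq_or_lt with rfl | hneg
    · exact hzero htS
    · have hadd := add_smul_one_mem_gardingCone hkn htS (neg_pos.mpr hneg)
      rw [add_assoc, ← add_smul, add_neg_cancel, zero_smul, add_zero] at hadd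
      exact hx (gardingCone_subset_closedGardingCone hadd)
  · have hinterior : t ∈ interior S :=
      interior_maximal (Set.preimage_mono gardingCone_subset_closedGardingCone)
        (isOpen_gardingCone.preimage hcont) (mem_gardingCone_of_esymm_pos hkn htS hpos)
    exact ht.2 hinterior

theorem esymm_one_pos_of_ne_zero (hx : x ∈ closedGardingCone n 2) (hne : x ≠ 0) :
    0 < esymm n 1 x := by
  have hsq := esymm_one_sq x
  have hnorm : 0 < x ⬝ᵥ x := by simpa using Matrix.dotProduct_self_star_pos_iff.mpr hne
  have h1 := hx 1 one_le_two
  have h2 := hx 2 le_rfl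
  exact h1.lt_of_ne fun h => by rw [← h] at hsq; linarith

theorem exists_ne_zero_le_sub_smul_one {m : ℕ} (hmn : m + 2 ≤ n)
    (hx : x ∉ closedGardingCone n (m + 2)) :
    ∃ y ∈ closedGardingCone n (m + 2), y ≠ 0 ∧ esymm n (m + 2) y = 0 ∧
      ∃ t : ℝ, 0 < t ∧ x ≤ y - t • 1 := by
  obtain ⟨t, ht, hmem, hzero⟩ := exists_add_smul_one_mem_and_esymm_eq_zero hmn hx
  by_cases hne : x + t • 1 = 0
  -- Here `x = -t • 1`, so any nonzero vector on a coordinate axis serves as `y`.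
  · have hnonneg : 0 ≤ (Pi.single ⟨0, by omega⟩ 1 : Fin n → ℝ) := Pi.single_nonneg.mpr zero_le_one
    refine ⟨Pi.single ⟨0, by omega⟩ 1, mem_closedGardingCone_of_nonneg hnonneg, by simp,
      esymm_add_two_single m _ 1, t, ht, ?_⟩
    rw [eq_neg_of_add_eq_zero_left hne, sub_eq_add_neg]
    exact le_add_of_nonneg_left hnonneg
  · exact ⟨_, hmem, hne, hzero, t, ht, by rw [add_sub_cancel_right]⟩

end ClosedCone

section Slice

variable {n k : ℕ} {x : Fin n → ℝ}

/-- The part of `Γ_k` on which `σ_k = 1`, over which the infimum is taken. -/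
def gardingSlice (n k : ℕ) : Set (Fin n → ℝ) := {x | x ∈ gardingCone n k ∧ esymm n k x = 1}

/-- The multiple of `x` on which `σ_k = 1`, meaningful when `σ_k(x) > 0` and `k ≠ 0`. -/
noncomputable def esymmNormalize (n k : ℕ) (x : Fin n → ℝ) : Fin n → ℝ :=
  (esymm n k x ^ (1 / k : ℝ))⁻¹ • x

theorem esymmNormalize_mem_gardingSlice (hk : k ≠ 0) (hx : x ∈ gardingCone n k) :
    esymmNormalize n k x ∈ gardingSlice n k := by
  have hpos := hx k le_rfl
  refine ⟨smul_mem_gardingCone hx (inv_pos.mpr (Real.rpow_pos_of_pos hpos _)), ?_⟩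
  rw [esymmNormalize, esymm_smul, one_div, inv_pow, Real.rpow_inv_natCast_pow hpos.le hk,
    inv_mul_cancel₀ hpos.ne']

theorem dotProduct_esymmGrad_esymmNormalize (hx : x ∈ gardingCone n (k + 1)) :
    x ⬝ᵥ esymmGrad n k (esymmNormalize n (k + 1) x) =
      (k + 1 : ℕ) * esymm n (k + 1) x ^ (1 / (k + 1 : ℕ) : ℝ) := by
  have hroot := Real.rpow_pos_of_pos (hx (k + 1) le_rfl) (1 / (k + 1 : ℕ))
  have heuler := dotProduct_esymmGrad_self k (esymmNormalize n (k + 1) x)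
  rw [(esymmNormalize_mem_gardingSlice k.succ_ne_zero hx).2, mul_one] at heuler
  nth_rw 1 [esymmNormalize] at heuler
  rwa [smul_dotProduct, smul_eq_mul, inv_mul_eq_iff_eq_mul₀ hroot.ne', mul_comm] at heuler

theorem dotProduct_esymmGrad_esymmNormalize_add_smul_one_le (hkn : k + 1 ≤ n)
    (hx : x ∈ closedGardingCone n (k + 1)) {ε : ℝ} (hε : 0 < ε) :
    x ⬝ᵥ esymmGrad n k (esymmNormalize n (k + 1) (x + ε • 1)) ≤
      (k + 1 : ℕ) * esymm n (k + 1) (x + ε • 1) ^ (1 / (k + 1 : ℕ) : ℝ) := by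
  have hmem := add_smul_one_mem_gardingCone hkn hx hε
  rw [← dotProduct_esymmGrad_esymmNormalize hmem]
  exact dotProduct_esymmGrad_mono (esymmNormalize_mem_gardingSlice k.add_one_ne_zero hmem).1
    (le_add_of_nonneg_right (smul_nonneg hε.le zero_le_one))

theorem iInf_dotProduct_esymmGrad_eq (hkn : k + 1 ≤ n) (hx : x ∈ closedGardingCone n (k + 1)) :
    ⨅ γ ∈ gardingSlice n (k + 1), ((x ⬝ᵥ esymmGrad n k γ : ℝ) : EReal) =
      (((k + 1 : ℕ) * esymm n (k + 1) x ^ (1 / (k + 1 : ℕ) : ℝ) : ℝ) : EReal) := by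
  refine le_antisymm ?_ (le_iInf₂ fun γ hγ => EReal.coe_le_coe_iff.mpr ?_)
  · have hlim := (tendsto_esymm_add_smul_one_rpow (k + 1) x (p := 1 / (k + 1 : ℕ))
      (by positivity)).const_mul ((k + 1 : ℕ) : ℝ)
    refine ge_of_tendsto ((continuous_coe_real_ereal.tendsto _).comp hlim) ?_
    filter_upwards [self_mem_nhdsWithin] with ε hε
    have hslice := esymmNormalize_mem_gardingSlice k.add_one_ne_zero
      (add_smul_one_mem_gardingCone hkn hx hε)
    exact (iInf₂_le _ hslice).trans (EReal.coe_le_coe_iff.mpr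
      (dotProduct_esymmGrad_esymmNormalize_add_smul_one_le hkn hx hε))
  · simpa only [hγ.2, Real.one_rpow, mul_one] using
      garding_inequality_of_mem_closedGardingCone hkn hγ.1 hx

end Slice

section Unbounded

variable {n m : ℕ} {x : Fin n → ℝ}

theorem tendsto_esymm_one_esymmNormalize (hmn : m + 2 ≤ n) (hx : x ∈ closedGardingCone n (m + 2))
    (hne : x ≠ 0) (hzero : esymm n (m + 2) x = 0) :
    Tendsto (fun ε : ℝ => esymm n 1 (esymmNormalize n (m + 2) (x + ε • 1))) (𝓝[>] 0) atTop := by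
  have hone : 0 < esymm n 1 x :=
    esymm_one_pos_of_ne_zero (fun j hj => hx j (hj.trans (Nat.le_add_left 2 m))) hne
  have hroot : Tendsto (fun ε : ℝ => esymm n (m + 2) (x + ε • 1) ^ (1 / (m + 2 : ℕ) : ℝ))
      (𝓝[>] 0) (𝓝[>] 0) := by
    refine tendsto_nhdsWithin_iff.mpr ⟨?_, ?_⟩
    · have hlim := tendsto_esymm_add_smul_one_rpow (m + 2) x (p := 1 / (m + 2 : ℕ))
        (by positivity)
      rwa [hzero, Real.zero_rpow (by positivity)] at hlim
    · filter_upwards [self_mem_nhdsWithin] with ε hε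
      exact Real.rpow_pos_of_pos (add_smul_one_mem_gardingCone hmn hx hε _ le_rfl) _
  refine (hroot.inv_tendsto_nhdsGT_zero.atTop_mul_pos hone (tendsto_esymm_add_smul_one 1 x)).congr
    fun ε => ?_
  rw [esymmNormalize, esymm_smul, pow_one, Pi.inv_apply]

theorem tendsto_esymm_esymmNormalize (hmn : m + 2 ≤ n) (hx : x ∈ closedGardingCone n (m + 2))
    (hne : x ≠ 0) (hzero : esymm n (m + 2) x = 0) :
    Tendsto (fun ε : ℝ => esymm n (m + 1) (esymmNormalize n (m + 2) (x + ε • 1)))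
      (𝓝[>] 0) atTop := by
  refine tendsto_atTop.mpr fun M => ?_
  filter_upwards [self_mem_nhdsWithin, (tendsto_esymm_one_esymmNormalize hmn hx hne
    hzero).eventually_ge_atTop (|M| ^ (m + 1))] with ε hε hlarge
  obtain ⟨hγ, hγ1⟩ := esymmNormalize_mem_gardingSlice (by omega)
    (add_smul_one_mem_gardingCone hmn hx hε)
  have hmaclaurin := esymm_one_mul_pow_le_pow hγ
  rw [hγ1, one_pow, mul_one] at hmaclaurin
  exact (le_abs_self M).trans (le_of_pow_le_pow_left₀ (by omega) (hγ _ (by omega)).le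
    (hlarge.trans hmaclaurin))

theorem tendsto_sub_smul_one_dotProduct_esymmGrad (hmn : m + 2 ≤ n)
    (hx : x ∈ closedGardingCone n (m + 2)) (hne : x ≠ 0) (hzero : esymm n (m + 2) x = 0) {t : ℝ}
    (ht : 0 < t) :
    Tendsto (fun ε : ℝ => (x - t • 1) ⬝ᵥ
      esymmGrad n (m + 1) (esymmNormalize n (m + 2) (x + ε • 1))) (𝓝[>] 0) atBot := by
  have hcoeff : 0 < t * (n - (m + 1 : ℕ)) :=
    mul_pos ht (sub_pos.mpr (Nat.cast_lt.mpr (Nat.lt_of_succ_le hmn)))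
  have hbounded := (tendsto_esymm_add_smul_one_rpow (m + 2) x (p := 1 / (m + 2 : ℕ))
    (by positivity)).const_mul ((m + 2 : ℕ) : ℝ)
  have hunbounded := tendsto_neg_atTop_atBot.comp
    ((tendsto_esymm_esymmNormalize hmn hx hne hzero).const_mul_atTop hcoeff)
  refine tendsto_atBot_mono' _ ?_ (hbounded.add_atBot hunbounded)
  filter_upwards [self_mem_nhdsWithin] with ε hε
  have hle := dotProduct_esymmGrad_esymmNormalize_add_smul_one_le hmn hx hε
  rw [sub_dotProduct, smul_dotProduct, one_dotProduct_esymmGrad, smul_eq_mul, sub_eq_add_neg,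
    ← mul_assoc]
  exact add_le_add_left hle _

theorem iInf_dotProduct_esymmGrad_eq_bot (hmn : m + 2 ≤ n) (hx : x ∉ closedGardingCone n (m + 2)) :
    ⨅ γ ∈ gardingSlice n (m + 2), ((x ⬝ᵥ esymmGrad n (m + 1) γ : ℝ) : EReal) = ⊥ := by
  obtain ⟨y, hy, hne, hzero, t, ht, hle⟩ := exists_ne_zero_le_sub_smul_one hmn hx
  refine (EReal.eq_bot_iff_forall_lt _).mpr fun M => ?_
  obtain ⟨ε, hlt, hε⟩ := (((tendsto_sub_smul_one_dotProduct_esymmGrad hmn hy hne hzero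
    ht).eventually_lt_atBot M).and self_mem_nhdsWithin).exists
  have hslice := esymmNormalize_mem_gardingSlice (m + 1).add_one_ne_zero
    (add_smul_one_mem_gardingCone hmn hy hε)
  exact (iInf₂_le _ hslice).trans_lt
    (EReal.coe_lt_coe_iff.mpr ((dotProduct_esymmGrad_mono hslice.1 hle).trans_lt hlt))

end Unbounded

theorem stmt_13 (n k : ℕ) (hk2 : 2 ≤ k) (hkn : k ≤ n) (μ : Fin n → ℝ) :
    ((∀ j, 1 ≤ j → j ≤ k → 0 ≤ esymm n j μ) →
      (⨅ γ ∈ {γ : Fin n → ℝ |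
          (∀ j, 1 ≤ j → j ≤ k → 0 < esymm n j γ) ∧ esymm n k γ = 1},
          ((∑ i, μ i * esymm n (k - 1) (Function.update γ i 0) : ℝ) : EReal))
        = (((k : ℝ) * esymm n k μ ^ (1 / (k : ℝ)) : ℝ) : EReal)) ∧
    (¬ (∀ j, 1 ≤ j → j ≤ k → 0 ≤ esymm n j μ) →
      (⨅ γ ∈ {γ : Fin n → ℝ |
          (∀ j, 1 ≤ j → j ≤ k → 0 < esymm n j γ) ∧ esymm n k γ = 1},
          ((∑ i, μ i * esymm n (k - 1) (Function.update γ i 0) : ℝ) : EReal)) = ⊥) := by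
  obtain ⟨m, rfl⟩ := Nat.exists_eq_add_of_le' hk2
  simp only [← mem_gardingCone_iff, ← mem_closedGardingCone_iff]
  exact ⟨iInf_dotProduct_esymmGrad_eq hkn, iInf_dotProduct_esymmGrad_eq_bot hkn⟩
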